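/- Let α and β be non-real quaternions that are conjugate (α = h⁻¹βh for some nonzero h ∈ ℍ), and let c ∈ ℍ. Then the equation αx − xβ = c has a solution x ∈ ℍ if and only if ᾱc = cβ. Moreover, if ᾱc = cβ, then x₀ = (2 Im(α))⁻¹ c is a solution, x₀ = −c (2 Im(β))⁻¹, and the full solution set is x₀ + {y ∈ ℍ : αy = yβ}. -/

import Mathlib

open Quaternion

/-!
Write `T x = αx - xβ`. Conjugate quaternions share the real numbers `t = α + ᾱ` and `n = ᾱα`, so
`β` is a root of `X² - tX + n` and `ᾱ(Tx) - (Tx)β = x(n - tβ + β²) = 0`: every `c` in the range of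
`T` satisfies `ᾱc = cβ`. Conversely, for such `c` one has `Tc = αc - ᾱc = (2 Im α)c`; as `2 Im α`
commutes with `α`, dividing by it on the left solves the equation.
-/

section Ring

variable {A : Type*} [Ring A] {a a' b b' c w x : A}

/-- The Sylvester operator `x ↦ a * x - x * b` of `a` and `b`, as an endomorphism of the additive
group of the ring, so that the equation `a * x - x * b = c` describes one of its fibres. -/
def sylvesterHom (a b : A) : A →+ A :=
  AddMonoidHom.mulLeft a - AddMonoidHom.mulRight b

theorem sylvesterHom_apply (a b x : A) : sylvesterHom a b x = a * x - x * b :=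
  rfl

theorem mem_ker_sylvesterHom : x ∈ (sylvesterHom a b).ker ↔ a * x = x * b := by
  rw [AddMonoidHom.mem_ker, sylvesterHom_apply, sub_eq_zero]

theorem semiconjBy_sylvesterHom (hadd : SemiconjBy x (b + b') (a + a'))
    (hmul : SemiconjBy x (b' * b) (a' * a)) : SemiconjBy (sylvesterHom a b x) b a' := by
  have hadd_mul_b : x * (b + b') * b = (a + a') * x * b := congrArg (· * b) hadd.eq
  have hexpand : sylvesterHom a b x * b - a' * sylvesterHom a b x =
      (a + a') * x * b - x * b * b - a' * a * x := by
    rw [sylvesterHom_apply]; noncomm_ring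
  rw [SemiconjBy, ← sub_eq_zero, hexpand, ← hadd_mul_b, ← hmul.eq]
  noncomm_ring

theorem sylvesterHom_of_semiconjBy (h : SemiconjBy c b a') :
    sylvesterHom a b c = (a - a') * c := by
  rw [sylvesterHom_apply, h.eq, sub_mul]

theorem sylvesterHom_mul_of_commute (h : Commute a w) (x : A) :
    sylvesterHom a b (w * x) = w * sylvesterHom a b x := by
  simp only [sylvesterHom_apply, mul_sub, ← mul_assoc, h.eq]

end Ring

section DivisionRing

variable {D : Type*} [DivisionRing D] {a a' b b' c : D}

theorem sylvesterHom_inv_sub_mul (hne : a ≠ a') (hcomm : Commute a a') (h : SemiconjBy c b a') :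
    sylvesterHom a b ((a - a')⁻¹ * c) = c := by
  have hinv : Commute a (a - a')⁻¹ := ((Commute.refl a).sub_right hcomm).inv_right₀
  rw [sylvesterHom_mul_of_commute hinv, sylvesterHom_of_semiconjBy h,
    inv_mul_cancel_left₀ (sub_ne_zero.2 hne)]

theorem inv_sub_mul_eq_neg_mul_inv_sub (hadd : SemiconjBy c (b + b') (a + a'))
    (h : SemiconjBy c b a') : (a - a')⁻¹ * c = -(c * (b - b')⁻¹) := by
  have h' : SemiconjBy c b' a := by simpa using hadd.sub_right h
  rw [← (h'.sub_right h).inv_right₀.eq, ← neg_sub b b', inv_neg, mul_neg]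

end DivisionRing

theorem setOf_map_eq_eq_image_add_ker {G H : Type*} [AddGroup G] [AddGroup H] {f : G →+ H}
    {x₀ : G} {c : H} (h : f x₀ = c) : {x | f x = c} = (x₀ + ·) '' (f.ker : Set G) := by
  ext x
  simp [Set.image_add_left, AddMonoidHom.mem_ker, ← h, neg_add_eq_zero, eq_comm (a := f x₀)]

section QuaternionCommRing

variable {R : Type*} [CommRing R] {α β : ℍ[R]}

theorem two_mul_im_eq_sub_star (α : ℍ[R]) : 2 * α.im = α - star α := by
  rw [two_mul]
  ext <;> simp

theorem re_mul_comm (α β : ℍ[R]) : (α * β).re = (β * α).re := by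
  simp only [re_mul]
  ring

theorem re_eq_of_isConj (h : IsConj α β) : α.re = β.re := by
  obtain ⟨u, hu⟩ := h
  rw [← u.inv_mul_cancel_left α, hu.eq, re_mul_comm, u.mul_inv_cancel_right]

theorem normSq_eq_of_isConj (h : IsConj α β) : normSq α = normSq β :=
  isConj_iff_eq.1 ((normSq : ℍ[R] →*₀ R).toMonoidHom.map_isConj h)

theorem semiconjBy_add_star_of_isConj (h : IsConj α β) (x : ℍ[R]) :
    SemiconjBy x (α + star α) (β + star β) := by
  rw [self_add_star', self_add_star', re_eq_of_isConj h]
  exact (coe_commute _ x).symm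

theorem semiconjBy_star_mul_self_of_isConj (h : IsConj α β) (x : ℍ[R]) :
    SemiconjBy x (star α * α) (star β * β) := by
  rw [star_mul_self, star_mul_self, normSq_eq_of_isConj h]
  exact (coe_commute _ x).symm

theorem ne_star_of_im_ne_zero [NoZeroDivisors R] [CharZero R] (h : α.im ≠ 0) : α ≠ star α := by
  intro hstar
  rw [star_eq_self.1 hstar.symm, im_coe] at h
  exact h rfl

end QuaternionCommRing

theorem sylvester_scalar_singular_general {K : Type*} [Field K] [LinearOrder K]
    [IsStrictOrderedRing K] (α β c : ℍ[K]) (hα : α.im ≠ 0)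
    (hconj : ∃ h : ℍ[K], h ≠ 0 ∧ α = h⁻¹ * β * h) :
    ((∃ x : ℍ[K], α * x - x * β = c) ↔ star α * c = c * β) ∧
      (star α * c = c * β →
        α * ((2 * α.im)⁻¹ * c) - ((2 * α.im)⁻¹ * c) * β = c ∧
        (2 * α.im)⁻¹ * c = -(c * (2 * β.im)⁻¹) ∧
        {x : ℍ[K] | α * x - x * β = c} =
          (fun y => (2 * α.im)⁻¹ * c + y) '' {y : ℍ[K] | α * y = y * β}) := by
  obtain ⟨h, hh, hαβ⟩ := hconj
  have hβα : IsConj β α :=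
    ⟨(Units.mk0 h hh)⁻¹, by simp [SemiconjBy, hαβ, mul_assoc, mul_inv_cancel₀ hh]⟩
  have hadd := semiconjBy_add_star_of_isConj hβα
  have hsol (hc : star α * c = c * β) : sylvesterHom α β ((2 * α.im)⁻¹ * c) = c := by
    rw [two_mul_im_eq_sub_star]
    exact sylvesterHom_inv_sub_mul (ne_star_of_im_ne_zero hα) (star_comm_self' α).symm hc.symm
  refine ⟨⟨?_, fun hc ↦ ⟨_, hsol hc⟩⟩, fun hc ↦ ⟨hsol hc, ?_, ?_⟩⟩
  · rintro ⟨x, rfl⟩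
    exact (semiconjBy_sylvesterHom (hadd x) (semiconjBy_star_mul_self_of_isConj hβα x)).eq.symm
  · rw [two_mul_im_eq_sub_star, two_mul_im_eq_sub_star]
    exact inv_sub_mul_eq_neg_mul_inv_sub (hadd c) hc.symm
  · simpa only [sylvesterHom_apply, ← SetLike.setOfPred_mem_eq, mem_ker_sylvesterHom] using
      setOf_map_eq_eq_image_add_ker (hsol hc)

/-- Let `α, β` be conjugate non-real quaternions and `c ∈ ℍ`.  Then
`αx − xβ = c` has a solution iff `ᾱc = cβ`.  Moreover, if `ᾱc = cβ`, then
`x₀ = (2 Im α)⁻¹ c` is a solution, `x₀ = −c (2 Im β)⁻¹`, and the full solution set is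
`x₀ + {y : αy = yβ}`. -/
theorem sylvester_scalar_singular (α β c : ℍ[ℝ])
    (hα : α.im ≠ 0) (hβ : β.im ≠ 0)
    (hconj : ∃ h : ℍ[ℝ], h ≠ 0 ∧ α = h⁻¹ * β * h) :
    ((∃ x : ℍ[ℝ], α * x - x * β = c) ↔ star α * c = c * β) ∧
      (star α * c = c * β →
        α * ((2 * α.im)⁻¹ * c) - ((2 * α.im)⁻¹ * c) * β = c ∧
        (2 * α.im)⁻¹ * c = -(c * (2 * β.im)⁻¹) ∧
        {x : ℍ[ℝ] | α * x - x * β = c} =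
          (fun y => (2 * α.im)⁻¹ * c + y) '' {y : ℍ[ℝ] | α * y = y * β}) :=
  sylvester_scalar_singular_general α β c hα hconj
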